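/- Let k and n be even integers with 0 < k < n. Then the real Wronski map is not surjective: there exists a nonzero polynomial w ∈ ℝ[t] with deg w ≤ k(n−k) such that there is no k-tuple of ℝ-linearly independent polynomials f₁,…,f_k ∈ ℝ[t], each of degree at most n−1, whose Wronskian Wr(f₁,…,f_k) is a nonzero real scalar multiple of w. [Theorem of Eremenko–Gabrielov on non-surjectivity of the real Wronski map when k and n are both even.] -/

import Mathlib

/-- The Wronskian of real polynomials `f 0, …, f (k-1)`: the determinant of the `k × k`
matrix whose `(i, j)` entry is the `i`-th derivative of `f j`. -/
noncomputable def Wr {k : ℕ} (f : Fin k → Polynomial ℝ) : Polynomial ℝ :=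
  Matrix.det (Matrix.of fun i j : Fin k => Polynomial.derivative^[(i : ℕ)] (f j))

/-!
Every finite-dimensional space of real polynomials has a basis with pairwise distinct degrees and
pairwise distinct orders of vanishing at `0`. Call the number of even degrees minus the number of
odd degrees in such a basis the parity excess of the space. We construct inductively Wronskians
`w j` of degree `2 * j + 1` all of whose preimages have parity excess `2`. In degree `1`, a
`k`-dimensional space with `k` even has degrees `0, …, k - 2, k`, of parity excess `2`. In degree
`k * (n - k) - 1`, a `k`-dimensional space of polynomials of degree less than `n`, with `k` and `n`
even, has degrees `n - k - 1, n - k + 1, …, n - 1`, of parity excess `-2`. So `w j` is not attained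
when `2 * j + 1 = k * (n - k) - 1`.

Given `w j`, take `w (j + 1) = w j * (1 + x ^ 2 * X ^ 2)` with `x` small. Let spaces `V x` have
these Wronskians. As `x → 0` they accumulate at a space with Wronskian `w j`, and after rescaling
the variable by `x` they accumulate at a space `N` whose Wronskian is `X ^ d * (1 + X ^ 2)`. The
orders of vanishing of `N` at `0` are the degrees of the former limit, and the degrees of `N` are
those of `V x`. Passing from the orders of `N` to its degrees adds `1` twice. If this changed the
parity excess, the coefficients of the Wronskian at `X ^ d`, `X ^ (d + 1)` and `X ^ (d + 2)`, which
are products of Vandermonde determinants with coefficients of the basis, could not have the signs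
`1, 0, 1` (up to scaling).
-/

open Polynomial Matrix Filter Topology Finset

section Exponents

variable {ι : Type*}

theorem add_single_mul_add_single [DecidableEq ι] {R : Type*} [CommSemiring R] (φ : ℕ → R)
    (e : ι → ℕ) {r q : ι} (hrq : r ≠ q) (x : ι) :
    φ ((e + Pi.single r 1 : ι → ℕ) x) * φ ((e + Pi.single q 1 : ι → ℕ) x) =
      φ (e x) * φ ((e + Pi.single r 1 + Pi.single q 1 : ι → ℕ) x) := by
  rcases eq_or_ne x q with rfl | hx
  · simp [hrq.symm]
  · simp [hx, mul_comm]

variable [Fintype ι]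

theorem eq_of_le_of_sum_le {e e' : ι → ℕ} (hle : e ≤ e') (hsum : ∑ r, e' r ≤ ∑ r, e r) :
    e = e' :=
  funext fun r => (sum_eq_sum_iff_of_le fun r _ => hle r).1
    (le_antisymm (sum_le_sum fun r _ => hle r) hsum) r (mem_univ r)

theorem sum_add_single [DecidableEq ι] (e : ι → ℕ) (r : ι) (m : ℕ) :
    ∑ x, (e + Pi.single r m : ι → ℕ) x = ∑ x, e x + m := by
  simp [sum_add_distrib]

theorem exists_add_single_le [DecidableEq ι] {e e' : ι → ℕ} (hle : e ≤ e')
    (hsum : ∑ r, e r < ∑ r, e' r) : ∃ r, e + Pi.single r 1 ≤ e' := by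
  obtain ⟨r, -, hr⟩ := exists_lt_of_sum_lt hsum
  refine ⟨r, fun x => ?_⟩
  rcases eq_or_ne x r with rfl | hx
  · simpa using hr
  · simpa [hx] using hle x

theorem exists_eq_add_single [DecidableEq ι] {e e' : ι → ℕ} (hle : e ≤ e')
    (hsum : ∑ r, e' r = ∑ r, e r + 1) : ∃ r, e' = e + Pi.single r 1 := by
  obtain ⟨r, hr⟩ := exists_add_single_le hle (by omega)
  exact ⟨r, (eq_of_le_of_sum_le hr (by rw [sum_add_single, hsum])).symm⟩

theorem exists_eq_add_single_add_single [DecidableEq ι] {e e' : ι → ℕ} (hle : e ≤ e')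
    (hsum : ∑ r, e' r = ∑ r, e r + 2) :
    ∃ r q, e' = e + Pi.single r 1 + Pi.single q 1 := by
  obtain ⟨r, hr⟩ := exists_add_single_le hle (by omega)
  obtain ⟨q, hq⟩ := exists_eq_add_single hr (by rw [sum_add_single, hsum])
  exact ⟨r, q, hq⟩

/-- The number of even exponents minus the number of odd exponents. -/
def parityExcess (e : ι → ℕ) : ℤ := ∑ r, (-1) ^ e r

theorem parityExcess_comp_perm (e : ι → ℕ) (σ : Equiv.Perm ι) :
    parityExcess (e ∘ σ) = parityExcess e :=
  Equiv.sum_comp σ fun r => (-1 : ℤ) ^ e r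

theorem parityExcess_add_single [DecidableEq ι] (e : ι → ℕ) (r : ι) :
    parityExcess (e + Pi.single r 1) = parityExcess e - 2 * (-1) ^ e r := by
  rw [parityExcess, parityExcess, ← add_sum_erase _ _ (mem_univ r),
    ← add_sum_erase _ (fun x => (-1 : ℤ) ^ e x) (mem_univ r),
    sum_congr rfl fun x hx => by
      rw [Pi.add_apply, Pi.single_eq_of_ne (ne_of_mem_erase hx), add_zero]]
  simp only [Pi.add_apply, Pi.single_eq_same, pow_succ]
  ring

theorem parityExcess_add_single_add_single [DecidableEq ι] {e : ι → ℕ} {r q : ι}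
    (h : r ≠ q → Odd (e r + e q)) :
    parityExcess (e + Pi.single r 1 + Pi.single q 1) = parityExcess e := by
  rw [parityExcess_add_single, parityExcess_add_single]
  rcases eq_or_ne q r with rfl | hqr
  · simp [pow_succ]
  · have hodd : (-1 : ℤ) ^ e r * (-1) ^ e q = -1 := by
      rw [← pow_add, (h hqr.symm).neg_one_pow]
    rw [Pi.add_apply, Pi.single_eq_of_ne hqr, add_zero]
    rcases neg_one_pow_eq_or ℤ (e r) with hr | hr <;> rw [hr] at hodd ⊢ <;> omega

theorem parityExcess_reflect {n : ℕ} (hn : Even n) {e : ι → ℕ} (he : ∀ r, e r < n) :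
    parityExcess (fun r => n - 1 - e r) = -parityExcess e := by
  rw [parityExcess, parityExcess, ← sum_neg_distrib]
  refine sum_congr rfl fun r _ => ?_
  have hsplit : n = n - 1 - e r + e r + 1 := by have := he r; omega
  rcases Nat.even_or_odd (e r) with h | h
  · rw [h.neg_one_pow, Odd.neg_one_pow (by grind)]
  · rw [h.neg_one_pow, Even.neg_one_pow (by grind), neg_neg]

theorem exists_perm_val_le_of_injective {k : ℕ} {e : Fin k → ℕ} (he : Function.Injective e) :
    ∃ σ : Equiv.Perm (Fin k), Fin.val ≤ e ∘ σ := by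
  have hmono : StrictMono (e ∘ Tuple.sort e) :=
    (Tuple.monotone_sort e).strictMono_of_injective (he.comp (Tuple.sort e).injective)
  refine ⟨Tuple.sort e, fun i => ?_⟩
  obtain ⟨i, hi⟩ := i
  induction i with
  | zero => exact Nat.zero_le _
  | succ i ih => exact (ih (by omega)).trans_lt (hmono (Fin.mk_lt_mk.2 i.lt_succ_self))

theorem parityExcess_eq_two {k : ℕ} (hk : Even k) {e : Fin k → ℕ} (he : Function.Injective e)
    (hsum : ∑ r, e r = ∑ i : Fin k, (i : ℕ) + 1) : parityExcess e = 2 := by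
  obtain ⟨σ, hσ⟩ := exists_perm_val_le_of_injective he
  obtain ⟨r, hr⟩ := exists_eq_add_single hσ ((Equiv.sum_comp σ e).trans hsum)
  have hlast : (r : ℕ) + 1 = k := by
    by_contra hne
    have hlt : (r : ℕ) + 1 < k := by omega
    have h1 : e (σ r) = r + 1 := by simpa using congrFun hr r
    have h2 : e (σ ⟨r + 1, hlt⟩) = r + 1 := by
      simpa [Fin.ext_iff, Pi.single_apply] using congrFun hr ⟨r + 1, hlt⟩
    simpa [Fin.ext_iff] using σ.injective (he (h1.trans h2.symm))
  have hodd : Odd (r : ℕ) := by grind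
  rw [← parityExcess_comp_perm e σ, hr, parityExcess_add_single, parityExcess,
    Fin.sum_neg_one_pow, if_pos hk, hodd.neg_one_pow]
  norm_num

theorem parityExcess_eq_neg_two {k n : ℕ} (hk : Even k) (hn : Even n) (hkn : k ≤ n)
    {e : Fin k → ℕ} (he : Function.Injective e) (hlt : ∀ r, e r < n)
    (hsum : ∑ r, e r + 1 = k * (n - k) + ∑ i : Fin k, (i : ℕ)) : parityExcess e = -2 := by
  have hinj : Function.Injective fun r => n - 1 - e r := fun a b h => he <| by
    have := hlt a
    have := hlt b
    dsimp only at h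
    omega
  have hadd : ∑ r, (n - 1 - e r) + ∑ r, e r = k * (n - 1) := by
    rw [← sum_add_distrib,
      sum_congr rfl fun r _ => Nat.sub_add_cancel (Nat.le_sub_one_of_lt (hlt r))]
    simp
  have hgauss : (∑ i : Fin k, (i : ℕ)) * 2 = k * (k - 1) := by
    rw [← sum_range fun i => i, sum_range_id_mul_two]
  have hsplit : k * (n - k) + k * (k - 1) = k * (n - 1) := by
    rcases k.eq_zero_or_pos with rfl | hpos
    · simp
    · rw [← mul_add]
      congr 1
      omega
  have := parityExcess_eq_two hk hinj (by omega)
  rw [parityExcess_reflect hn hlt] at this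
  omega

end Exponents

section Vandermonde

variable {k : ℕ}

/-- The Vandermonde determinant of the exponents `e 0, …, e (k - 1)`. -/
noncomputable def vand (e : Fin k → ℕ) : ℝ := (vandermonde fun r => (e r : ℝ)).det

theorem vand_ne_zero {e : Fin k → ℕ} (he : Function.Injective e) : vand e ≠ 0 :=
  det_vandermonde_ne_zero_iff.2 (Nat.cast_injective.comp he)

theorem one_lt_sq_sub_of_even_add {a b : ℕ} (hab : a ≠ b) (h : Even (a + b)) :
    1 < ((a : ℝ) - b) ^ 2 := by
  have hgap : (1 : ℤ) < |(a : ℤ) - b| := by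
    rw [lt_abs]
    obtain ⟨m, hm⟩ := h
    omega
  rw [one_lt_sq_iff_one_lt_abs]
  exact_mod_cast hgap

theorem vand_mul_vand_add_single_pos {e : Fin k → ℕ} {r q : Fin k} (hrq : r ≠ q)
    (he : Function.Injective e)
    (he' : Function.Injective (e + Pi.single r 1 + Pi.single q 1)) (hpar : Even (e r + e q)) :
    0 < (vand e * vand (e + Pi.single r 1 + Pi.single q 1)) *
      (vand (e + Pi.single r 1) * vand (e + Pi.single q 1)) := by
  -- The factor at a pair of indices is a square, except at `{r, q}`, where it is
  -- `t ^ 2 * (t ^ 2 - 1)` with `t = e r - e q` even and nonzero.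
  simp only [vand, det_vandermonde, ← prod_mul_distrib]
  refine prod_pos fun i _ => prod_pos fun j hj => ?_
  have hji : j ≠ i := (mem_Ioi.1 hj).ne'
  have hsq := mul_self_pos.2 (mul_ne_zero
    (sub_ne_zero.2 (Nat.cast_injective.ne (he.ne hji) : (e j : ℝ) ≠ e i))
    (sub_ne_zero.2 (Nat.cast_injective.ne (he'.ne hji) : (_ : ℝ) ≠ _)))
  by_cases hi : i ≠ r ∧ i ≠ q
  · have hmul := add_single_mul_add_single (fun t => (t : ℝ) - e i) e hrq j
    simp only [Pi.add_apply, Pi.single_eq_of_ne hi.1, Pi.single_eq_of_ne hi.2, add_zero]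
      at hmul hsq ⊢
    rwa [hmul]
  by_cases hj : j ≠ r ∧ j ≠ q
  · have hmul := add_single_mul_add_single (fun t => (e j : ℝ) - t) e hrq i
    simp only [Pi.add_apply, Pi.single_eq_of_ne hj.1, Pi.single_eq_of_ne hj.2, add_zero]
      at hmul hsq ⊢
    rwa [hmul]
  have hgap := one_lt_sq_sub_of_even_add (he.ne hrq) hpar
  obtain ⟨rfl, rfl⟩ | ⟨rfl, rfl⟩ : i = r ∧ j = q ∨ i = q ∧ j = r := by grind
  all_goals
    simp only [Pi.add_apply, Pi.single_eq_same, Pi.single_eq_of_ne hji,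
      Pi.single_eq_of_ne hji.symm, add_zero, Nat.cast_add, Nat.cast_one]
    nlinarith

end Vandermonde

section EulerWronskian

theorem coeff_prod_eq_sum_piAntidiag {ι R : Type*} [CommSemiring R] [DecidableEq ι] (s : Finset ι)
    (f : ι → R[X]) (m : ℕ) :
    (∏ r ∈ s, f r).coeff m = ∑ e ∈ piAntidiag s m, ∏ r ∈ s, (f r).coeff (e r) := by
  rw [← Polynomial.coeff_coe, ← coeToPowerSeries.ringHom_apply, map_prod, PowerSeries.coeff_prod]
  refine sum_bij (fun e _ => e) (fun e he => ?_) (fun _ _ _ _ h => DFunLike.coe_injective h)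
    (fun e he => ⟨Finsupp.onFinset s e (mem_piAntidiag.1 he).2, ?_, rfl⟩) fun _ _ => by simp
  · grind [mem_finsuppAntidiag, mem_piAntidiag]
  · exact mem_finsuppAntidiag.2 ⟨(mem_piAntidiag.1 he).1, Finsupp.support_onFinset_subset⟩

theorem coeff_X_pow_mul_iterate_derivative {R : Type*} [CommRing R] (p : R[X]) (i m : ℕ) :
    (X ^ i * derivative^[i] p).coeff m = (descPochhammer R i).eval (m : R) * p.coeff m := by
  rw [coeff_X_pow_mul', descPochhammer_eval_eq_descFactorial]
  split_ifs with him
  · rw [coeff_iterate_derivative, Nat.sub_add_cancel him, nsmul_eq_mul]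
  · rw [Nat.descFactorial_eq_zero_iff_lt.2 (not_le.1 him), Nat.cast_zero, zero_mul]

variable {k : ℕ}

/-- The Wronskian of `f` with respect to the Euler operator `X * d/dX` in place of `d/dX`, written
in terms of `Wr` by triangularity of `X ^ i * (d/dX) ^ i` in powers of `X * d/dX`. It is used
because `X * d/dX` is diagonal on monomials and commutes with rescaling of `X`. -/
noncomputable def eulerWr (f : Fin k → ℝ[X]) : ℝ[X] := X ^ (∑ i : Fin k, (i : ℕ)) * Wr f

theorem eulerWr_eq_det (f : Fin k → ℝ[X]) :
    eulerWr f = (of fun i j : Fin k => X ^ (i : ℕ) * derivative^[(i : ℕ)] (f j)).det := by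
  rw [eulerWr, Wr, ← prod_pow_eq_pow_sum, ← det_mul_column]
  rfl

theorem vand_eq_det_descPochhammer (e : Fin k → ℕ) :
    vand e = (of fun i r : Fin k => (descPochhammer ℝ i).eval (e r : ℝ)).det := by
  rw [← det_transpose]
  exact det_eval_matrixOfPolynomials_eq_det_vandermonde _ _
    (fun i => descPochhammer_natDegree ℝ i) fun i => monic_descPochhammer ℝ i

theorem coeff_eulerWr (f : Fin k → ℝ[X]) (m : ℕ) :
    (eulerWr f).coeff m = ∑ e ∈ piAntidiag univ m, (∏ r, (f r).coeff (e r)) * vand e := by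
  simp only [eulerWr_eq_det, vand_eq_det_descPochhammer, det_apply', finsetSum_coeff,
    ← C_eq_intCast, coeff_C_mul, coeff_prod_eq_sum_piAntidiag, of_apply,
    coeff_X_pow_mul_iterate_derivative, mul_sum]
  rw [sum_comm]
  refine sum_congr rfl fun e _ => sum_congr rfl fun σ _ => ?_
  rw [prod_mul_distrib]
  ring

theorem eulerWr_mulVec (A : Matrix (Fin k) (Fin k) ℝ) (f : Fin k → ℝ[X]) :
    eulerWr (A.map C *ᵥ f) = C A.det * eulerWr f := by
  have hmul : (of fun i j : Fin k => derivative^[(i : ℕ)] ((A.map C *ᵥ f) j)) =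
      (of fun i j : Fin k => derivative^[(i : ℕ)] (f j)) * (A.map C)ᵀ := by
    ext1 i j
    simp only [mulVec, dotProduct, mul_apply, of_apply, transpose_apply, map_apply,
      iterate_derivative_sum, iterate_derivative_C_mul, mul_comm (derivative^[_] _)]
  rw [eulerWr, eulerWr, Wr, Wr, hmul, det_mul, det_transpose, ← RingHom.mapMatrix_apply,
    ← RingHom.map_det]
  ring

theorem eulerWr_comp (f : Fin k → ℝ[X]) (x : ℝ) :
    eulerWr (fun r => (f r).comp (C x * X)) = (eulerWr f).comp (C x * X) := by
  ext m
  simp only [comp_C_mul_X_coeff, coeff_eulerWr, sum_mul]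
  refine sum_congr rfl fun e he => ?_
  rw [prod_mul_distrib, prod_pow_eq_pow_sum, (mem_piAntidiag.1 he).1]
  ring

end EulerWronskian

section CoeffMatrix

variable {ι R : Type*} [CommRing R]

/-- The matrix of the coefficients of the family `f` at the exponents `e`; its maximal minors are
the Plücker coordinates of the span of `f`. -/
def coeffMatrix {κ : Type*} (f : ι → R[X]) (e : κ → ℕ) : Matrix ι κ R :=
  of fun r j => (f r).coeff (e j)

theorem linearIndependent_of_linearIndependent_coeffMatrix {κ : Type*} {f : ι → R[X]} {e : κ → ℕ}
    (h : LinearIndependent R (coeffMatrix f e).row) : LinearIndependent R f :=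
  h.of_comp (LinearMap.pi fun j => lcoeff R (e j))

variable [Fintype ι]

theorem coeffMatrix_mulVec {κ : Type*} (A : Matrix ι ι R) (f : ι → R[X]) (e : κ → ℕ) :
    coeffMatrix (A.map C *ᵥ f) e = A * coeffMatrix f e := by
  ext i j
  simp [coeffMatrix, mulVec, dotProduct, mul_apply, finsetSum_coeff]

theorem map_C_mulVec_mem {S : Submodule R R[X]} (A : Matrix ι ι R) {f : ι → R[X]}
    (hf : ∀ r, f r ∈ S) (r : ι) : (A.map C *ᵥ f) r ∈ S :=
  sum_mem fun j _ => by simpa only [map_apply, ← smul_eq_C_mul] using S.smul_mem _ (hf j)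

variable [DecidableEq ι]

theorem linearIndependent_of_det_coeffMatrix_ne_zero [IsDomain R] {f : ι → R[X]} {e : ι → ℕ}
    (h : (coeffMatrix f e).det ≠ 0) : LinearIndependent R f :=
  linearIndependent_of_linearIndependent_coeffMatrix (linearIndependent_rows_of_det_ne_zero h)

theorem det_coeffMatrix_mulVec (A : Matrix ι ι R) (f : ι → R[X]) (e : ι → ℕ) :
    (coeffMatrix (A.map C *ᵥ f) e).det = A.det * (coeffMatrix f e).det := by
  rw [coeffMatrix_mulVec, det_mul]

theorem det_coeffMatrix_comp_C_mul_X (f : ι → R[X]) (e : ι → ℕ) (x : R) :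
    (coeffMatrix (fun r => (f r).comp (C x * X)) e).det =
      x ^ (∑ r, e r) * (coeffMatrix f e).det := by
  rw [← prod_pow_eq_pow_sum, ← det_mul_row]
  congr 1
  ext r j
  rw [coeffMatrix, of_apply, comp_C_mul_X_coeff, mul_comm]
  rfl

theorem exists_perm_prod_coeff_ne_zero {f : ι → R[X]} {e : ι → ℕ}
    (h : (coeffMatrix f e).det ≠ 0) : ∃ σ : Equiv.Perm ι, ∏ r, (f r).coeff (e (σ r)) ≠ 0 := by
  rw [← det_transpose, det_apply'] at h
  obtain ⟨σ, -, hσ⟩ := exists_ne_zero_of_sum_ne_zero h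
  exact ⟨σ, right_ne_zero_of_mul hσ⟩

theorem det_coeffMatrix_eq_prod {f : ι → R[X]} {e : ι → ℕ} (he : Function.Injective e)
    (hunique : ∀ e' : ι → ℕ, ∑ r, e' r = ∑ r, e r → ∏ r, (f r).coeff (e' r) ≠ 0 → e' = e) :
    (coeffMatrix f e).det = ∏ r, (f r).coeff (e r) := by
  rw [← det_transpose, det_apply', sum_eq_single_of_mem 1 (mem_univ _) fun σ _ hσ => ?_]
  · simp [coeffMatrix]
  · refine mul_eq_zero_of_right _ (not_not.1 fun hne => hσ (Equiv.ext fun r => he ?_))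
    exact congrFun (hunique (e ∘ σ) (Equiv.sum_comp σ e) hne) r

end CoeffMatrix

theorem coeff_eulerWr_eq_prod_mul_vand {k : ℕ} {f : Fin k → ℝ[X]} {e : Fin k → ℕ}
    (hunique : ∀ e' : Fin k → ℕ, ∑ r, e' r = ∑ r, e r → ∏ r, (f r).coeff (e' r) ≠ 0 → e' = e) :
    (eulerWr f).coeff (∑ r, e r) = (∏ r, (f r).coeff (e r)) * vand e := by
  rw [coeff_eulerWr]
  refine sum_eq_single_of_mem e (by simp) fun e' he' hne => mul_eq_zero_of_left ?_ _
  exact not_not.1 fun h => hne (hunique e' (mem_piAntidiag.1 he').1 h)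

/-- A family of nonzero polynomials with pairwise distinct degrees and pairwise distinct orders of
vanishing at `0`. Every finite-dimensional space of polynomials has a basis of this kind
(`exists_isAdapted_mulVec`). -/
structure IsAdapted {ι R : Type*} [Semiring R] (f : ι → R[X]) : Prop where
  ne_zero : ∀ r, f r ≠ 0
  injective_natTrailingDegree : Function.Injective fun r => (f r).natTrailingDegree
  injective_natDegree : Function.Injective fun r => (f r).natDegree

theorem IsAdapted.cons {k : ℕ} {R : Type*} [Semiring R] {u : Fin k → R[X]} {f : R[X]}
    (hu : IsAdapted u) (hf0 : f ≠ 0)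
    (htrail : ∀ r, (u r).natTrailingDegree ≠ f.natTrailingDegree)
    (hdeg : ∀ r, (u r).natDegree ≠ f.natDegree) :
    IsAdapted (Fin.cons f u : Fin (k + 1) → R[X]) where
  ne_zero := Fin.cases hf0 hu.ne_zero
  injective_natTrailingDegree := by
    change Function.Injective (natTrailingDegree ∘ Fin.cons f u)
    rw [Fin.comp_cons, Fin.cons_injective_iff]
    exact ⟨fun ⟨r, hr⟩ => htrail r hr, hu.injective_natTrailingDegree⟩
  injective_natDegree := by
    change Function.Injective (natDegree ∘ Fin.cons f u)
    rw [Fin.comp_cons, Fin.cons_injective_iff]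
    exact ⟨fun ⟨r, hr⟩ => hdeg r hr, hu.injective_natDegree⟩

section Field

variable {K : Type*} [Field K]

theorem natDegree_ne_of_minimalFor {V : Submodule K K[X]} {f u : K[X]}
    (hf : MinimalFor (fun g => g ∈ V ∧ g ≠ 0) natDegree f) (hu : u ∈ V) (hu0 : u ≠ 0)
    (hcoeff : u.coeff f.natTrailingDegree = 0) : u.natDegree ≠ f.natDegree := by
  intro hdeg
  have hf0 : f ≠ 0 := hf.1.2
  set c := u.leadingCoeff / f.leadingCoeff with hc
  have hc0 : c ≠ 0 := div_ne_zero (leadingCoeff_ne_zero.2 hu0) (leadingCoeff_ne_zero.2 hf0)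
  have hlt : (u - C c * f).degree < u.degree := by
    refine degree_sub_lt_left ?_ hu0 ?_
    · rw [degree_C_mul hc0, degree_eq_natDegree hu0, degree_eq_natDegree hf0, hdeg]
    · rw [leadingCoeff_mul, leadingCoeff_C, hc, div_mul_cancel₀ _ (leadingCoeff_ne_zero.2 hf0)]
  have hmem : u - C c * f ∈ V := by
    rw [← smul_eq_C_mul]
    exact V.sub_mem hu (V.smul_mem c hf.1.1)
  rcases eq_or_ne (u - C c * f) 0 with h0 | h0
  · rw [sub_eq_zero.1 h0, coeff_C_mul] at hcoeff
    exact mul_ne_zero hc0 (trailingCoeff_nonzero_iff_nonzero.2 hf0) hcoeff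
  · have hlt' : (u - C c * f).natDegree < f.natDegree := hdeg ▸ natDegree_lt_natDegree h0 hlt
    exact absurd (hf.2 ⟨hmem, h0⟩ hlt'.le) (not_le.2 hlt')

theorem exists_isAdapted_of_le_finrank {k : ℕ} (V : Submodule K K[X]) [FiniteDimensional K V]
    (hk : k ≤ Module.finrank K V) : ∃ f : Fin k → K[X], IsAdapted f ∧ ∀ r, f r ∈ V := by
  induction k generalizing V with
  | zero => exact ⟨Fin.elim0, ⟨nofun, nofun, nofun⟩, nofun⟩
  | succ k ih =>
    -- Split off `f` of minimal degree and recurse into the kernel of its trailing coefficient.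
    -- There the degree of `f` cannot recur: cancelling leading terms would beat its minimality.
    have hV : V ≠ ⊥ := by
      rintro rfl
      simp at hk
    obtain ⟨f, hf⟩ := exists_minimalFor_of_wellFoundedLT (fun g => g ∈ V ∧ g ≠ 0) natDegree
      (V.exists_mem_ne_zero_of_ne_bot hV)
    have htrail : f.coeff f.natTrailingDegree ≠ 0 := trailingCoeff_nonzero_iff_nonzero.2 hf.1.2
    let ℓ : Module.Dual K V := lcoeff K f.natTrailingDegree ∘ₗ V.subtype
    have hℓ : ℓ ≠ 0 := fun h => htrail (LinearMap.congr_fun h ⟨f, hf.1.1⟩)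
    obtain ⟨u, hu, huV⟩ := ih ((LinearMap.ker ℓ).map V.subtype) (by
      rw [V.finrank_map_subtype_eq]
      have := Module.Dual.finrank_ker_add_one_of_ne_zero hℓ
      omega)
    have hmem : ∀ r, u r ∈ V ∧ (u r).coeff f.natTrailingDegree = 0 := fun r => by
      obtain ⟨v, hv, hvu⟩ := huV r
      exact hvu ▸ ⟨v.2, hv⟩
    refine ⟨Fin.cons f u, hu.cons hf.1.2 (fun r h => ?_) fun r => ?_,
      Fin.cases hf.1.1 fun r => (hmem r).1⟩
    · refine trailingCoeff_nonzero_iff_nonzero.2 (hu.ne_zero r) ?_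
      rw [trailingCoeff, h, (hmem r).2]
    · exact natDegree_ne_of_minimalFor hf (hmem r).1 (hu.ne_zero r) (hmem r).2

end Field

section ExponentBounds

variable {ι R : Type*} [Fintype ι] [CommRing R] {f : ι → R[X]} {e : ι → ℕ}

theorem le_natDegree_of_prod_coeff_ne_zero (h : ∏ r, (f r).coeff (e r) ≠ 0) :
    e ≤ fun r => (f r).natDegree := fun r =>
  le_natDegree_of_ne_zero fun h0 => h (prod_eq_zero (mem_univ r) h0)

theorem natTrailingDegree_le_of_prod_coeff_ne_zero (h : ∏ r, (f r).coeff (e r) ≠ 0) :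
    (fun r => (f r).natTrailingDegree) ≤ e := fun r =>
  natTrailingDegree_le_of_ne_zero fun h0 => h (prod_eq_zero (mem_univ r) h0)

theorem eq_natDegree_of_prod_coeff_ne_zero (hsum : ∑ r, e r = ∑ r, (f r).natDegree)
    (h : ∏ r, (f r).coeff (e r) ≠ 0) : e = fun r => (f r).natDegree :=
  eq_of_le_of_sum_le (le_natDegree_of_prod_coeff_ne_zero h) hsum.ge

theorem eq_natTrailingDegree_of_prod_coeff_ne_zero
    (hsum : ∑ r, e r = ∑ r, (f r).natTrailingDegree) (h : ∏ r, (f r).coeff (e r) ≠ 0) :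
    e = fun r => (f r).natTrailingDegree :=
  (eq_of_le_of_sum_le (natTrailingDegree_le_of_prod_coeff_ne_zero h) hsum.le).symm

theorem parityExcess_eq_natDegree_of_det_coeffMatrix_ne_zero [DecidableEq ι]
    (hsum : ∑ r, e r = ∑ r, (f r).natDegree) (h : (coeffMatrix f e).det ≠ 0) :
    parityExcess e = parityExcess fun r => (f r).natDegree := by
  obtain ⟨σ, hσ⟩ := exists_perm_prod_coeff_ne_zero h
  rw [← parityExcess_comp_perm e σ,
    ← eq_natDegree_of_prod_coeff_ne_zero ((Equiv.sum_comp σ e).trans hsum) hσ]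
  rfl

end ExponentBounds

theorem exists_prod_coeff_ne_zero_of_coeff_eulerWr_ne_zero {k : ℕ} {f : Fin k → ℝ[X]} {m : ℕ}
    (h : (eulerWr f).coeff m ≠ 0) :
    ∃ e : Fin k → ℕ, ∑ r, e r = m ∧ ∏ r, (f r).coeff (e r) ≠ 0 := by
  rw [coeff_eulerWr] at h
  obtain ⟨e, he, hne⟩ := exists_ne_zero_of_sum_ne_zero h
  exact ⟨e, (mem_piAntidiag.1 he).1, left_ne_zero_of_mul hne⟩

namespace IsAdapted

section IsDomain

variable {ι R : Type*} [Fintype ι] [CommRing R] [IsDomain R] {f : ι → R[X]}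

theorem prod_coeff_natDegree_ne_zero (hf : IsAdapted f) : ∏ r, (f r).coeff (f r).natDegree ≠ 0 :=
  prod_ne_zero_iff.2 fun r _ => leadingCoeff_ne_zero.2 (hf.ne_zero r)

theorem prod_coeff_natTrailingDegree_ne_zero (hf : IsAdapted f) :
    ∏ r, (f r).coeff (f r).natTrailingDegree ≠ 0 :=
  prod_ne_zero_iff.2 fun r _ => trailingCoeff_nonzero_iff_nonzero.2 (hf.ne_zero r)

variable [DecidableEq ι]

theorem det_coeffMatrix_natDegree_ne_zero (hf : IsAdapted f) :
    (coeffMatrix f fun r => (f r).natDegree).det ≠ 0 := by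
  rw [det_coeffMatrix_eq_prod hf.injective_natDegree fun _ => eq_natDegree_of_prod_coeff_ne_zero]
  exact hf.prod_coeff_natDegree_ne_zero

theorem det_coeffMatrix_natTrailingDegree_ne_zero (hf : IsAdapted f) :
    (coeffMatrix f fun r => (f r).natTrailingDegree).det ≠ 0 := by
  rw [det_coeffMatrix_eq_prod hf.injective_natTrailingDegree
    fun _ => eq_natTrailingDegree_of_prod_coeff_ne_zero]
  exact hf.prod_coeff_natTrailingDegree_ne_zero

end IsDomain

variable {k : ℕ} {f : Fin k → ℝ[X]}

theorem natDegree_eulerWr (hf : IsAdapted f) : (eulerWr f).natDegree = ∑ r, (f r).natDegree := by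
  refine natDegree_eq_of_le_of_coeff_ne_zero (natDegree_le_iff_coeff_eq_zero.2 fun m hm => ?_) ?_
  · by_contra h
    obtain ⟨e, rfl, he⟩ := exists_prod_coeff_ne_zero_of_coeff_eulerWr_ne_zero h
    exact hm.not_ge (sum_le_sum fun r _ => le_natDegree_of_prod_coeff_ne_zero he r)
  · rw [coeff_eulerWr_eq_prod_mul_vand fun _ => eq_natDegree_of_prod_coeff_ne_zero]
    exact mul_ne_zero hf.prod_coeff_natDegree_ne_zero (vand_ne_zero hf.injective_natDegree)

theorem coeff_eulerWr_sum_natTrailingDegree_ne_zero (hf : IsAdapted f) :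
    (eulerWr f).coeff (∑ r, (f r).natTrailingDegree) ≠ 0 := by
  rw [coeff_eulerWr_eq_prod_mul_vand fun _ => eq_natTrailingDegree_of_prod_coeff_ne_zero]
  exact mul_ne_zero hf.prod_coeff_natTrailingDegree_ne_zero
    (vand_ne_zero hf.injective_natTrailingDegree)

theorem eulerWr_ne_zero (hf : IsAdapted f) : eulerWr f ≠ 0 := fun h =>
  hf.coeff_eulerWr_sum_natTrailingDegree_ne_zero (by rw [h, coeff_zero])

theorem natTrailingDegree_eulerWr (hf : IsAdapted f) :
    (eulerWr f).natTrailingDegree = ∑ r, (f r).natTrailingDegree := by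
  refine (natTrailingDegree_le_of_ne_zero hf.coeff_eulerWr_sum_natTrailingDegree_ne_zero).antisymm
    (le_natTrailingDegree hf.eulerWr_ne_zero fun m hm => ?_)
  by_contra h
  obtain ⟨e, rfl, he⟩ := exists_prod_coeff_ne_zero_of_coeff_eulerWr_ne_zero h
  exact hm.not_ge (sum_le_sum fun r _ => natTrailingDegree_le_of_prod_coeff_ne_zero he r)

end IsAdapted

theorem exists_isAdapted_mulVec {K : Type*} [Field K] {k : ℕ} {f : Fin k → K[X]}
    (hf : LinearIndependent K f) :
    ∃ A : Matrix (Fin k) (Fin k) K, A.det ≠ 0 ∧ IsAdapted (A.map C *ᵥ f) := by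
  have hrank : Module.finrank K (Submodule.span K (Set.range f)) = k := by
    rw [finrank_span_eq_card hf, Fintype.card_fin]
  have := FiniteDimensional.span_of_finite K (Set.finite_range f)
  obtain ⟨u, hu, humem⟩ := exists_isAdapted_of_le_finrank _ hrank.ge
  choose A hA using fun r => (Submodule.mem_span_range_iff_exists_fun K).1 (humem r)
  obtain rfl : u = (of A).map C *ᵥ f := funext fun r => by
    simp only [← hA, smul_eq_C_mul]
    rfl
  refine ⟨of A, fun h0 => hu.det_coeffMatrix_natDegree_ne_zero ?_, hu⟩
  rw [det_coeffMatrix_mulVec, h0, zero_mul]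

theorem IsAdapted.linearIndependent {ι R : Type*} [Finite ι] [CommRing R] [IsDomain R]
    {f : ι → R[X]} (hf : IsAdapted f) : LinearIndependent R f := by
  classical
  have := Fintype.ofFinite ι
  exact linearIndependent_of_det_coeffMatrix_ne_zero hf.det_coeffMatrix_natDegree_ne_zero

theorem eulerWr_ne_zero_of_linearIndependent {k : ℕ} {f : Fin k → ℝ[X]}
    (hf : LinearIndependent ℝ f) : eulerWr f ≠ 0 := by
  obtain ⟨A, -, hA⟩ := exists_isAdapted_mulVec hf
  exact fun h0 => hA.eulerWr_ne_zero (by rw [eulerWr_mulVec, h0, mul_zero])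

theorem IsAdapted.sum_natDegree_eq_of_eulerWr_eq {k : ℕ} {f : Fin k → ℝ[X]} (hf : IsAdapted f)
    {q : ℝ[X]} {c : ℝ} (hWr : eulerWr f = C c * q) : ∑ r, (f r).natDegree = q.natDegree := by
  have hc : c ≠ 0 := fun h0 => hf.eulerWr_ne_zero (by rw [hWr, h0, C_0, zero_mul])
  rw [← hf.natDegree_eulerWr, hWr, natDegree_C_mul hc]

theorem coeff_eulerWr_eq_add {k : ℕ} {f : Fin k → ℝ[X]} {e : Fin k → ℕ} {r q : Fin k}
    (hrq : r ≠ q) (htrail : (fun r => (f r).natTrailingDegree) = e)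
    (hdeg : (fun r => (f r).natDegree) = e + Pi.single r 1 + Pi.single q 1) :
    (eulerWr f).coeff (∑ r, e r + 1) =
      (∏ x, (f x).coeff ((e + Pi.single r 1 : Fin k → ℕ) x)) * vand (e + Pi.single r 1) +
      (∏ x, (f x).coeff ((e + Pi.single q 1 : Fin k → ℕ) x)) * vand (e + Pi.single q 1) := by
  have hne : e + Pi.single r 1 ≠ e + Pi.single q 1 := by
    intro h
    simpa [hrq] using congrFun h r
  rw [coeff_eulerWr, sum_eq_add_of_mem _ _ (by simp [sum_add_distrib])
    (by simp [sum_add_distrib]) hne]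
  rintro e' he' ⟨hr, hq⟩
  refine mul_eq_zero_of_left (not_not.1 fun h => ?_) _
  have h1 := htrail ▸ natTrailingDegree_le_of_prod_coeff_ne_zero h
  have h2 := hdeg ▸ le_natDegree_of_prod_coeff_ne_zero h
  obtain ⟨x, rfl⟩ := exists_eq_add_single h1 (mem_piAntidiag.1 he').1
  have hx := h2 x
  rcases eq_or_ne x r with rfl | hxr
  · exact hr rfl
  rcases eq_or_ne x q with rfl | hxq
  · exact hq rfl
  simp [hxr, hxq] at hx

theorem IsAdapted.parityExcess_natTrailingDegree_eq {k : ℕ} {f : Fin k → ℝ[X]} (hf : IsAdapted f)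
    (hsum : ∑ r, (f r).natDegree = ∑ r, (f r).natTrailingDegree + 2)
    (hmid : (eulerWr f).coeff (∑ r, (f r).natTrailingDegree + 1) = 0)
    (hpos : 0 < (eulerWr f).coeff (∑ r, (f r).natTrailingDegree) *
      (eulerWr f).coeff (∑ r, (f r).natDegree)) :
    parityExcess (fun r => (f r).natTrailingDegree) = parityExcess fun r => (f r).natDegree := by
  rw [coeff_eulerWr_eq_prod_mul_vand fun _ => eq_natTrailingDegree_of_prod_coeff_ne_zero,
    coeff_eulerWr_eq_prod_mul_vand fun _ => eq_natDegree_of_prod_coeff_ne_zero] at hpos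
  set e := fun r => (f r).natTrailingDegree with he
  set e' := fun r => (f r).natDegree with he'
  obtain ⟨r, q, hrq⟩ : ∃ r q, e' = e + Pi.single r 1 + Pi.single q 1 :=
    exists_eq_add_single_add_single (fun r => natTrailingDegree_le_natDegree (f r)) hsum
  rw [hrq]
  refine (parityExcess_add_single_add_single fun hne => ?_).symm
  by_contra hodd
  have hvand := vand_mul_vand_add_single_pos hne hf.injective_natTrailingDegree
    (hrq ▸ hf.injective_natDegree) (Nat.not_odd_iff_even.1 hodd)
  have hprod : (∏ x, (f x).coeff (e x)) * ∏ x, (f x).coeff (e' x) =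
      (∏ x, (f x).coeff ((e + Pi.single r 1 : Fin k → ℕ) x)) *
        ∏ x, (f x).coeff ((e + Pi.single q 1 : Fin k → ℕ) x) := by
    rw [← prod_mul_distrib, ← prod_mul_distrib, hrq]
    exact prod_congr rfl fun x _ => (add_single_mul_add_single (f x).coeff e hne x).symm
  rw [coeff_eulerWr_eq_add hne he.symm (he'.symm.trans hrq), add_eq_zero_iff_eq_neg] at hmid
  rw [← hrq] at hvand
  refine (mul_pos hpos hvand).not_ge ?_
  calc _ = -((∏ x, (f x).coeff ((e + Pi.single q 1 : Fin k → ℕ) x)) *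
          vand (e + Pi.single q 1) * (vand e * vand e')) ^ 2 := by
        linear_combination (vand e * vand e') ^ 2 *
          (vand (e + Pi.single r 1) * vand (e + Pi.single q 1) * hprod +
            (∏ x, (f x).coeff ((e + Pi.single q 1 : Fin k → ℕ) x)) *
              vand (e + Pi.single q 1) * hmid)
    _ ≤ 0 := neg_nonpos.2 (sq_nonneg _)

theorem IsAdapted.parityExcess_natTrailingDegree_eq_of_eulerWr_eq {k : ℕ} {f : Fin k → ℝ[X]}
    (hf : IsAdapted f) {D : ℕ} {b : ℝ} (hWr : eulerWr f = C b * (X ^ D * (1 + X ^ 2))) :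
    ∑ r, (f r).natTrailingDegree = D ∧ ∑ r, (f r).natDegree = D + 2 ∧
      parityExcess (fun r => (f r).natTrailingDegree) = parityExcess fun r => (f r).natDegree := by
  have hb : b ≠ 0 := by
    rintro rfl
    exact hf.eulerWr_ne_zero (by rw [hWr, C_0, zero_mul])
  have hcoeff (m : ℕ) : (eulerWr f).coeff (D + m) = b * (1 + X ^ 2 : ℝ[X]).coeff m := by
    rw [hWr, coeff_C_mul, add_comm D m, coeff_X_pow_mul]
  have h0 : (eulerWr f).coeff D = b := by simpa using hcoeff 0
  have hlo : (eulerWr f).natTrailingDegree = D := by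
    refine (natTrailingDegree_le_of_ne_zero (by simp [h0, hb])).antisymm
      (le_natTrailingDegree hf.eulerWr_ne_zero fun m hm => ?_)
    rw [hWr, coeff_C_mul, coeff_X_pow_mul', if_neg hm.not_ge, mul_zero]
  have hhi : (eulerWr f).natDegree = D + 2 := by
    rw [hWr, natDegree_C_mul hb]
    compute_degree!
  rw [hf.natTrailingDegree_eulerWr] at hlo
  rw [hf.natDegree_eulerWr] at hhi
  refine ⟨hlo, hhi, hf.parityExcess_natTrailingDegree_eq (by rw [hhi, hlo]) ?_ ?_⟩
  · rw [hlo, hcoeff]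
    simp [coeff_one]
  · rw [hhi, hlo, hcoeff, h0]
    simp [coeff_one, hb]

section OrthonormalCoeffs

theorem coeff_eq_zero_of_mem_degreeLT {R : Type*} [Semiring R] {n m : ℕ} {p : R[X]}
    (hp : p ∈ degreeLT R n) (hm : n ≤ m) : p.coeff m = 0 :=
  coeff_eq_zero_of_degree_lt ((mem_degreeLT.1 hp).trans_le (WithBot.coe_le_coe.2 hm))

theorem linearIndependent_coeffMatrix_of_mem_degreeLT {ι R : Type*} [CommRing R] {n : ℕ}
    {f : ι → R[X]} (hf : LinearIndependent R f) (hmem : ∀ r, f r ∈ degreeLT R n) :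
    LinearIndependent R (coeffMatrix f (Fin.val : Fin n → ℕ)).row := by
  refine hf.map_injOn (LinearMap.pi fun j : Fin n => lcoeff R j) fun p hp q hq hpq => ?_
  have hspan : Submodule.span R (Set.range f) ≤ degreeLT R n :=
    Submodule.span_le.2 (Set.range_subset_iff.2 hmem)
  ext m
  rcases lt_or_ge m n with hm | hm
  · exact congrFun hpq ⟨m, hm⟩
  · rw [coeff_eq_zero_of_mem_degreeLT (hspan hp) hm, coeff_eq_zero_of_mem_degreeLT (hspan hq) hm]

theorem exists_det_ne_zero_mul_mul_transpose_eq_one {ι κ : Type*} [Fintype ι] [DecidableEq ι]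
    [Fintype κ] {M : Matrix ι κ ℝ} (hM : LinearIndependent ℝ M.row) :
    ∃ A : Matrix ι ι ℝ, A.det ≠ 0 ∧ A * M * (A * M)ᵀ = 1 := by
  have hpos : (M * Mᵀ).PosDef := by
    simpa using PosDef.mul_conjTranspose_self M (vecMul_injective_iff.2 hM)
  obtain ⟨B, hB⟩ : ∃ B : Matrix ι ι ℝ, M * Mᵀ = Bᵀ * B := by
    open scoped MatrixOrder Matrix.Norms.L2Operator in
    simpa [star_eq_conjTranspose] using
      CStarAlgebra.nonneg_iff_eq_star_mul_self.1 hpos.posSemidef.nonneg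
  have hdet : IsUnit Bᵀ.det := by
    refine isUnit_iff_ne_zero.2 fun h0 => hpos.det_pos.ne' ?_
    rw [hB, det_mul, h0, zero_mul]
  have hdet' : IsUnit B.det := by rwa [det_transpose] at hdet
  refine ⟨Bᵀ⁻¹, (isUnit_nonsing_inv_det _ hdet).ne_zero, ?_⟩
  rw [transpose_mul, Matrix.mul_assoc, ← Matrix.mul_assoc M, hB, Matrix.mul_assoc,
    nonsing_inv_mul_cancel_left _ _ hdet, transpose_nonsing_inv, transpose_transpose,
    mul_nonsing_inv _ hdet']

/-- The polynomials `f r` have degree less than `n` and their coefficient vectors are orthonormal.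
Such families form a compact set of bases of subspaces of `ℝ[X]`. -/
structure HasOrthonormalCoeffs {ι : Type*} [DecidableEq ι] (n : ℕ) (f : ι → ℝ[X]) : Prop where
  mem_degreeLT : ∀ r, f r ∈ degreeLT ℝ n
  gram_eq_one : coeffMatrix f (Fin.val : Fin n → ℕ) * (coeffMatrix f (Fin.val : Fin n → ℕ))ᵀ = 1

variable {ι : Type*} [DecidableEq ι] {n : ℕ} {f : ι → ℝ[X]}

theorem exists_hasOrthonormalCoeffs_mulVec [Fintype ι] (hf : LinearIndependent ℝ f)
    (hmem : ∀ r, f r ∈ degreeLT ℝ n) :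
    ∃ A : Matrix ι ι ℝ, A.det ≠ 0 ∧ HasOrthonormalCoeffs n (A.map C *ᵥ f) := by
  obtain ⟨A, hA, hgram⟩ := exists_det_ne_zero_mul_mul_transpose_eq_one
    (linearIndependent_coeffMatrix_of_mem_degreeLT hf hmem)
  refine ⟨A, hA, map_C_mulVec_mem A hmem, ?_⟩
  rw [coeffMatrix_mulVec, hgram]

namespace HasOrthonormalCoeffs

protected theorem linearIndependent [Finite ι] (hf : HasOrthonormalCoeffs n f) :
    LinearIndependent ℝ f := by
  have := Fintype.ofFinite ι
  refine linearIndependent_of_linearIndependent_coeffMatrix (e := (Fin.val : Fin n → ℕ)) ?_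
  refine vecMul_injective_iff.1 fun u v huv => ?_
  have := congrArg (· ᵥ* (coeffMatrix f (Fin.val : Fin n → ℕ))ᵀ) huv
  simpa [vecMul_vecMul, hf.gram_eq_one] using this

theorem coeff_mem_Icc (hf : HasOrthonormalCoeffs n f) (r : ι) (m : ℕ) :
    (f r).coeff m ∈ Set.Icc (-1) 1 := by
  rw [Set.mem_Icc, ← abs_le, ← sq_le_one_iff_abs_le_one]
  rcases le_or_gt n m with hm | hm
  · simp [coeff_eq_zero_of_mem_degreeLT (hf.mem_degreeLT r) hm]
  · have hdiag : ∑ j : Fin n, (f r).coeff j ^ 2 = 1 := by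
      simpa [mul_apply, coeffMatrix, sq] using congrFun₂ hf.gram_eq_one r r
    exact hdiag ▸ single_le_sum (f := fun j : Fin n => (f r).coeff j ^ 2)
      (fun j _ => sq_nonneg _) (mem_univ ⟨m, hm⟩)

end HasOrthonormalCoeffs

end OrthonormalCoeffs

section TendstoCoeff

variable {α : Type*} {l : Filter α}

/-- Coefficientwise convergence of polynomials along a filter. -/
def TendstoCoeff (l : Filter α) (p : α → ℝ[X]) (p₀ : ℝ[X]) : Prop :=
  ∀ m, Tendsto (fun a => (p a).coeff m) l (𝓝 (p₀.coeff m))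

theorem TendstoCoeff.unique [l.NeBot] {p : α → ℝ[X]} {p₀ p₁ : ℝ[X]} (h₀ : TendstoCoeff l p p₀)
    (h₁ : TendstoCoeff l p p₁) : p₀ = p₁ :=
  Polynomial.ext fun m => tendsto_nhds_unique (h₀ m) (h₁ m)

theorem TendstoCoeff.mono {l' : Filter α} {p : α → ℝ[X]} {p₀ : ℝ[X]} (h : TendstoCoeff l p p₀)
    (hl : l' ≤ l) : TendstoCoeff l' p p₀ := fun m => (h m).mono_left hl

theorem tendstoCoeff_const (p : ℝ[X]) : TendstoCoeff l (fun _ => p) p := fun _ => tendsto_const_nhds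

theorem TendstoCoeff.congr' {p p' : α → ℝ[X]} {p₀ : ℝ[X]} (h : TendstoCoeff l p p₀)
    (hpp' : p =ᶠ[l] p') : TendstoCoeff l p' p₀ := fun m =>
  (h m).congr' (hpp'.mono fun _ ha => by rw [ha])

theorem TendstoCoeff.mul {p q : α → ℝ[X]} {p₀ q₀ : ℝ[X]} (hp : TendstoCoeff l p p₀)
    (hq : TendstoCoeff l q q₀) : TendstoCoeff l (fun a => p a * q a) (p₀ * q₀) := fun m => by
  simp only [coeff_mul]
  exact tendsto_finsetSum _ fun i _ => (hp i.1).mul (hq i.2)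

theorem TendstoCoeff.C {c : α → ℝ} {c₀ : ℝ} (h : Tendsto c l (𝓝 c₀)) :
    TendstoCoeff l (fun a => C (c a)) (C c₀) := fun m => by
  simp only [coeff_C]
  split_ifs
  exacts [h, tendsto_const_nhds]

theorem TendstoCoeff.exists_tendsto_of_eq_C_mul [l.NeBot] {p q : α → ℝ[X]} {p₀ q₀ : ℝ[X]}
    (hp : TendstoCoeff l p p₀) (hq : TendstoCoeff l q q₀) (hq₀ : q₀ ≠ 0) {c : α → ℝ}
    (h : ∀ᶠ a in l, p a = Polynomial.C (c a) * q a) :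
    ∃ c₀, Tendsto c l (𝓝 c₀) ∧ p₀ = Polynomial.C c₀ * q₀ := by
  obtain ⟨m, hm⟩ : ∃ m, q₀.coeff m ≠ 0 := by
    simpa [Polynomial.ext_iff] using hq₀
  have hc : Tendsto c l (𝓝 (p₀.coeff m / q₀.coeff m)) := by
    refine ((hp m).div (hq m) hm).congr' ?_
    filter_upwards [h, (hq m).eventually_ne hm] with a ha ham
    rw [Pi.div_apply, ha, coeff_C_mul, mul_div_cancel_right₀ _ ham]
  exact ⟨_, hc, hp.unique (((TendstoCoeff.C hc).mul hq).congr' (h.mono fun _ ha => ha.symm))⟩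

theorem tendstoCoeff_eulerWr {k : ℕ} {f : α → Fin k → ℝ[X]} {f₀ : Fin k → ℝ[X]}
    (h : ∀ r, TendstoCoeff l (fun a => f a r) (f₀ r)) :
    TendstoCoeff l (fun a => eulerWr (f a)) (eulerWr f₀) := fun m => by
  simp only [coeff_eulerWr]
  exact tendsto_finsetSum _ fun e _ => (tendsto_finsetProd _ fun r _ => h r (e r)).mul_const _

theorem tendsto_coeffMatrix {ι κ : Type*} {f : α → ι → ℝ[X]} {f₀ : ι → ℝ[X]}
    (h : ∀ r, TendstoCoeff l (fun a => f a r) (f₀ r)) (e : κ → ℕ) :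
    Tendsto (fun a => coeffMatrix (f a) e) l (𝓝 (coeffMatrix f₀ e)) :=
  tendsto_pi_nhds.2 fun r => tendsto_pi_nhds.2 fun j => h r (e j)

theorem tendsto_det_coeffMatrix {ι : Type*} [Fintype ι] [DecidableEq ι] {f : α → ι → ℝ[X]}
    {f₀ : ι → ℝ[X]} (h : ∀ r, TendstoCoeff l (fun a => f a r) (f₀ r)) (e : ι → ℕ) :
    Tendsto (fun a => (coeffMatrix (f a) e).det) l (𝓝 (coeffMatrix f₀ e).det) :=
  ((continuous_id.matrix_det).tendsto _).comp (tendsto_coeffMatrix h e)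

theorem exists_tendstoCoeff_of_hasOrthonormalCoeffs {ι : Type*} [DecidableEq ι] {n : ℕ}
    {U : Ultrafilter α} {f : α → ι → ℝ[X]} (hf : ∀ᶠ a in U, HasOrthonormalCoeffs n (f a)) :
    ∃ f₀, HasOrthonormalCoeffs n f₀ ∧ ∀ r, TendstoCoeff U (fun a => f a r) (f₀ r) := by
  have hlim (r : ι) (m : ℕ) : ∃ y, Tendsto (fun a => (f a r).coeff m) U (𝓝 y) := by
    obtain ⟨y, -, hy⟩ := isCompact_Icc.ultrafilter_le_nhds' (U.map fun a => (f a r).coeff m)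
      (hf.mono fun a ha => ha.coeff_mem_Icc r m)
    exact ⟨y, hy⟩
  choose y hy using hlim
  have hy0 (r : ι) {m : ℕ} (hm : n ≤ m) : y r m = 0 :=
    tendsto_nhds_unique (hy r m) (tendsto_const_nhds.congr' (hf.mono fun a ha =>
      (coeff_eq_zero_of_mem_degreeLT (ha.mem_degreeLT r) hm).symm))
  let f₀ (r : ι) : ℝ[X] := ∑ m ∈ range n, monomial m (y r m)
  have hcoeff (r : ι) (m : ℕ) : (f₀ r).coeff m = y r m := by
    simpa [f₀, finsetSum_coeff, coeff_monomial] using fun hm => (hy0 r hm).symm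
  have htendsto (r : ι) : TendstoCoeff U (fun a => f a r) (f₀ r) := fun m => hcoeff r m ▸ hy r m
  refine ⟨f₀, ⟨fun r => ?_, ?_⟩, htendsto⟩
  · exact sum_mem fun m hm => mem_degreeLT.2
      ((degree_monomial_le m _).trans_lt (by exact_mod_cast mem_range.1 hm))
  · have hgram : Continuous fun M : Matrix ι (Fin n) ℝ => M * Mᵀ := by fun_prop
    exact tendsto_nhds_unique ((hgram.tendsto _).comp (tendsto_coeffMatrix htendsto _))
      (tendsto_const_nhds.congr' (hf.mono fun a ha => ha.gram_eq_one.symm))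

end TendstoCoeff

section Rescaling

theorem comp_C_inv_mul_X_eq_scaleRoots {K : Type*} [Field K] (q : K[X]) {x : K} (hx : x ≠ 0) :
    q.comp (C x⁻¹ * X) = C (x⁻¹ ^ q.natDegree) * q.scaleRoots x := by
  ext m
  rw [comp_C_mul_X_coeff, coeff_C_mul, coeff_scaleRoots]
  rcases le_or_gt m q.natDegree with hm | hm
  · obtain ⟨d, hd⟩ := Nat.exists_eq_add_of_le hm
    rw [hd, Nat.add_sub_cancel_left, pow_add]
    field_simp
    rw [mul_assoc, ← mul_pow, one_div_mul_cancel hx, one_pow, mul_one]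
  · simp [coeff_eq_zero_of_natDegree_lt hm]

theorem comp_C_mul_X_mem_degreeLT {R : Type*} [CommSemiring R] {n : ℕ} {p : R[X]}
    (hp : p ∈ degreeLT R n) (x : R) : p.comp (C x * X) ∈ degreeLT R n := by
  refine mem_degreeLT.2 ((degree_lt_iff_coeff_zero _ _).2 fun m hm => ?_)
  rw [comp_C_mul_X_coeff, coeff_eq_zero_of_mem_degreeLT hp (by exact_mod_cast hm), zero_mul]

theorem linearIndependent_comp_C_inv_mul_X {ι K : Type*} [Field K] {f : ι → K[X]}
    (hf : LinearIndependent K f) {x : K} (hx : x ≠ 0) :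
    LinearIndependent K fun r => (f r).comp (C x⁻¹ * X) := by
  let L : K[X] →ₗ[K] K[X] := (aeval (C x * X)).toLinearMap
  have hL : (L ∘ fun r => (f r).comp (C x⁻¹ * X)) = f := funext fun r => by
    change aeval (C x * X) ((f r).comp (C x⁻¹ * X)) = f r
    rw [← comp_eq_aeval, comp_assoc, mul_comp, C_comp, X_comp, ← mul_assoc, ← C_mul,
      inv_mul_cancel₀ hx, C_1, one_mul, comp_X]
  exact .of_comp L (hL.symm ▸ hf)

theorem tendstoCoeff_scaleRoots (q : ℝ[X]) (x : ℝ) :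
    TendstoCoeff (𝓝 x) q.scaleRoots (q.scaleRoots x) := fun m => by
  simp only [coeff_scaleRoots]
  exact Continuous.tendsto (by fun_prop) x

theorem tendstoCoeff_one_add_C_sq_mul_X_sq (x : ℝ) :
    TendstoCoeff (𝓝 x) (fun y => 1 + C (y ^ 2) * X ^ 2) (1 + C (x ^ 2) * X ^ 2) := fun m => by
  simp only [coeff_add, coeff_C_mul]
  exact Continuous.tendsto (by fun_prop) x

theorem one_add_C_mul_X_sq_ne_zero {R : Type*} [Semiring R] [Nontrivial R] (y : R) :
    (1 + C y * X ^ 2 : R[X]) ≠ 0 := fun h => by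
  simpa using congrArg (coeff · 0) h

theorem natDegree_mul_one_add_C_mul_X_sq {R : Type*} [CommRing R] [IsDomain R] {q : R[X]}
    (hq : q ≠ 0) {y : R} (hy : y ≠ 0) : (q * (1 + C y * X ^ 2)).natDegree = q.natDegree + 2 := by
  have h : (1 + C y * X ^ 2 : R[X]).natDegree = 2 := by compute_degree!
  rw [natDegree_mul hq (one_add_C_mul_X_sq_ne_zero y), h]

variable {k n : ℕ} {q : ℝ[X]} {x : ℝ}

/-- The families `M` and `N` behave like orthonormalized bases of a space `V` with Wronskian
proportional to `q * (1 + x ^ 2 * X ^ 2)` and of the rescaled space `{g (x⁻¹ * X) | g ∈ V}`. The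
fields only record the relations between `M` and `N` that make sense for `x = 0` as well, where they
describe limits of such pairs. -/
structure IsRescaledPair (n : ℕ) (q : ℝ[X]) (x : ℝ) (M N : Fin k → ℝ[X]) (a b : ℝ) : Prop where
  orthonormal_left : HasOrthonormalCoeffs n M
  orthonormal_right : HasOrthonormalCoeffs n N
  eulerWr_left : eulerWr M = C a * (q * (1 + C (x ^ 2) * X ^ 2))
  eulerWr_right : eulerWr N = C b * (q.scaleRoots x * (1 + X ^ 2))
  mul_det_right_eq : ∀ e : Fin k → ℕ, ∑ r, e r = q.natDegree →
    a * (coeffMatrix N e).det = b * (coeffMatrix M e).det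

theorem exists_isRescaledPair {f : Fin k → ℝ[X]} (hf : LinearIndependent ℝ f)
    (hmem : ∀ r, f r ∈ degreeLT ℝ n) (hx : x ≠ 0) {c : ℝ}
    (hWr : eulerWr f = C c * (q * (1 + C (x ^ 2) * X ^ 2))) :
    ∃ M N a b, IsRescaledPair n q x M N a b ∧
      ∀ e : Fin k → ℕ, (coeffMatrix N e).det ≠ 0 → (coeffMatrix f e).det ≠ 0 := by
  obtain ⟨A, -, hM⟩ := exists_hasOrthonormalCoeffs_mulVec hf hmem
  obtain ⟨B, -, hN⟩ := exists_hasOrthonormalCoeffs_mulVec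
    (linearIndependent_comp_C_inv_mul_X hf hx) fun r => comp_C_mul_X_mem_degreeLT (hmem r) x⁻¹
  refine ⟨_, _, A.det * c, B.det * c * x⁻¹ ^ q.natDegree, ⟨hM, hN, ?_, ?_, fun e he => ?_⟩,
    fun e he => ?_⟩
  · rw [eulerWr_mulVec, hWr, ← mul_assoc, ← C_mul]
  · rw [eulerWr_mulVec, eulerWr_comp, hWr, mul_comp, mul_comp,
      comp_C_inv_mul_X_eq_scaleRoots q hx]
    simp only [add_comp, mul_comp, C_comp, X_pow_comp, one_comp, mul_pow, C_mul, ← C_pow]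
    rw [← mul_assoc (C (x ^ 2)), ← C_mul, ← mul_pow, mul_inv_cancel₀ hx, one_pow, C_1, one_mul]
    ring
  · rw [det_coeffMatrix_mulVec, det_coeffMatrix_mulVec, det_coeffMatrix_comp_C_mul_X, he]
    ring
  · rw [det_coeffMatrix_mulVec, det_coeffMatrix_comp_C_mul_X] at he
    exact right_ne_zero_of_mul (right_ne_zero_of_mul he)

theorem exists_tendstoCoeff_of_isRescaledPair (hq : q ≠ 0) {U : Ultrafilter ℝ} (hU : ↑U ≤ 𝓝 x)
    {M N : ℝ → Fin k → ℝ[X]} {a b : ℝ → ℝ}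
    (h : ∀ᶠ y in U, IsRescaledPair n q y (M y) (N y) (a y) (b y)) :
    ∃ M₀ N₀ a₀ b₀, IsRescaledPair n q x M₀ N₀ a₀ b₀ ∧
      ∀ r, TendstoCoeff U (fun y => N y r) (N₀ r) := by
  obtain ⟨M₀, hM₀, hM⟩ :=
    exists_tendstoCoeff_of_hasOrthonormalCoeffs (h.mono fun _ hy => hy.orthonormal_left)
  obtain ⟨N₀, hN₀, hN⟩ :=
    exists_tendstoCoeff_of_hasOrthonormalCoeffs (h.mono fun _ hy => hy.orthonormal_right)
  obtain ⟨a₀, ha, hWrM⟩ := (tendstoCoeff_eulerWr hM).exists_tendsto_of_eq_C_mul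
    ((tendstoCoeff_const q).mul ((tendstoCoeff_one_add_C_sq_mul_X_sq x).mono hU))
    (mul_ne_zero hq (one_add_C_mul_X_sq_ne_zero _)) (h.mono fun _ hy => hy.eulerWr_left)
  obtain ⟨b₀, hb, hWrN⟩ := (tendstoCoeff_eulerWr hN).exists_tendsto_of_eq_C_mul
    (((tendstoCoeff_scaleRoots q x).mono hU).mul (tendstoCoeff_const (1 + X ^ 2)))
    (mul_ne_zero (scaleRoots_ne_zero hq x) (by simpa using one_add_C_mul_X_sq_ne_zero (1 : ℝ)))
    (h.mono fun _ hy => hy.eulerWr_right)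
  refine ⟨M₀, N₀, a₀, b₀, ⟨hM₀, hN₀, hWrM, hWrN, fun e he => ?_⟩, hN⟩
  exact tendsto_nhds_unique ((ha.mul (tendsto_det_coeffMatrix hN e)).congr'
    (h.mono fun y hy => hy.mul_det_right_eq e he)) (hb.mul (tendsto_det_coeffMatrix hM e))

end Rescaling

section ParityRigid

variable {k n : ℕ} {q : ℝ[X]} {p : ℤ}

/-- All `k`-dimensional spaces of polynomials of degree less than `n` whose Wronskian is
proportional to `q` have degree sets of parity excess `p`. The Wronskian is normalized as in
`eulerWr`. -/
def ParityRigid (k n : ℕ) (q : ℝ[X]) (p : ℤ) : Prop :=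
  ∀ f : Fin k → ℝ[X], IsAdapted f → (∀ r, f r ∈ degreeLT ℝ n) → ∀ c, eulerWr f = C c * q →
    parityExcess (fun r => (f r).natDegree) = p

theorem ParityRigid.parityExcess_eq (hq : ParityRigid k n q p)
    {f : Fin k → ℝ[X]} (hf : LinearIndependent ℝ f) (hmem : ∀ r, f r ∈ degreeLT ℝ n) {c : ℝ}
    (hWr : eulerWr f = C c * q) {e : Fin k → ℕ} (hsum : ∑ r, e r = q.natDegree)
    (he : (coeffMatrix f e).det ≠ 0) : parityExcess e = p := by
  obtain ⟨A, hA, hfA⟩ := exists_isAdapted_mulVec hf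
  have hWrA : eulerWr (A.map C *ᵥ f) = C (A.det * c) * q := by
    rw [eulerWr_mulVec, hWr, ← mul_assoc, ← C_mul]
  rw [parityExcess_eq_natDegree_of_det_coeffMatrix_ne_zero (f := A.map C *ᵥ f)]
  · exact hq _ hfA (map_C_mulVec_mem A hmem) _ hWrA
  · rw [hsum, hfA.sum_natDegree_eq_of_eulerWr_eq hWrA]
  · rw [det_coeffMatrix_mulVec]
    exact mul_ne_zero hA he

theorem ParityRigid.exists_parityExcess_eq_of_isRescaledPair (hq : ParityRigid k n q p)
    {M N : Fin k → ℝ[X]} {a b : ℝ} (h : IsRescaledPair n q 0 M N a b) :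
    ∃ e : Fin k → ℕ, (coeffMatrix N e).det ≠ 0 ∧ ∑ r, e r = q.natDegree + 2 ∧
      parityExcess e = p := by
  have hM := h.orthonormal_left.linearIndependent
  have hWrM : eulerWr M = C a * q := by simpa using h.eulerWr_left
  have ha : a ≠ 0 := fun h0 =>
    eulerWr_ne_zero_of_linearIndependent hM (by rw [hWrM, h0, C_0, zero_mul])
  obtain ⟨A, -, hN⟩ := exists_isAdapted_mulVec h.orthonormal_right.linearIndependent
  have hWrN : eulerWr (A.map C *ᵥ N) =
      C (A.det * b * q.leadingCoeff) * (X ^ q.natDegree * (1 + X ^ 2)) := by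
    rw [eulerWr_mulVec, h.eulerWr_right, scaleRoots_zero, smul_eq_C_mul, C_mul, C_mul]
    ring
  obtain ⟨hlo, hhi, hexcess⟩ := hN.parityExcess_natTrailingDegree_eq_of_eulerWr_eq hWrN
  have hhi_ne := hN.det_coeffMatrix_natDegree_ne_zero
  have hlo_ne := hN.det_coeffMatrix_natTrailingDegree_ne_zero
  rw [det_coeffMatrix_mulVec] at hhi_ne hlo_ne
  refine ⟨_, right_ne_zero_of_mul hhi_ne, hhi, ?_⟩
  rw [← hexcess]
  refine hq.parityExcess_eq hM h.orthonormal_left.mem_degreeLT hWrM hlo ?_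
  exact right_ne_zero_of_mul
    (h.mul_det_right_eq _ hlo ▸ mul_ne_zero ha (right_ne_zero_of_mul hlo_ne))

theorem ParityRigid.eventually_mul (hq0 : q ≠ 0) (hq : ParityRigid k n q p) :
    ∀ᶠ x in 𝓝[≠] (0 : ℝ), ParityRigid k n (q * (1 + C (x ^ 2) * X ^ 2)) p := by
  refine mem_iff_ultrafilter.2 fun U hU => not_not.1 fun hbad => ?_
  rw [← Ultrafilter.compl_mem_iff_notMem] at hbad
  have hpair : ∀ᶠ x in U, ∃ M N a b, IsRescaledPair n q x M N a b ∧ ∀ e : Fin k → ℕ,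
      (coeffMatrix N e).det ≠ 0 → ∑ r, e r = q.natDegree + 2 → parityExcess e ≠ p := by
    filter_upwards [hbad, hU self_mem_nhdsWithin] with x (hx : ¬ParityRigid ..) (hx0 : x ≠ 0)
    simp only [ParityRigid, not_forall] at hx
    obtain ⟨f, hf, hmem, c, hWr, hne⟩ := hx
    obtain ⟨M, N, a, b, h, hdet⟩ := exists_isRescaledPair hf.linearIndependent hmem hx0 hWr
    refine ⟨M, N, a, b, h, fun e he hsum => ?_⟩
    rw [parityExcess_eq_natDegree_of_det_coeffMatrix_ne_zero _ (hdet e he)]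
    · exact hne
    · rw [hsum, hf.sum_natDegree_eq_of_eulerWr_eq hWr,
        natDegree_mul_one_add_C_mul_X_sq hq0 (pow_ne_zero 2 hx0)]
  obtain ⟨S, hS, hpair⟩ := hpair.exists_mem
  choose! M N a b hpair using hpair
  obtain ⟨M₀, N₀, a₀, b₀, h₀, hN⟩ := exists_tendstoCoeff_of_isRescaledPair hq0
    (hU.trans nhdsWithin_le_nhds) (mem_of_superset hS fun x hx => (hpair x hx).1)
  obtain ⟨e, he, hsum, hexcess⟩ := hq.exists_parityExcess_eq_of_isRescaledPair h₀
  obtain ⟨x, hx, hxe⟩ :=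
    ((Filter.eventually_of_mem hS hpair).and
      ((tendsto_det_coeffMatrix hN e).eventually_ne he)).exists
  exact hx.2 e hxe hsum hexcess

end ParityRigid

theorem parityRigid_X_pow_mul_X {k : ℕ} (hk : Even k) (n : ℕ) :
    ParityRigid k n (X ^ (∑ i : Fin k, (i : ℕ)) * X) 2 := fun f hf _ c hWr =>
  parityExcess_eq_two hk hf.injective_natDegree <| by
    rw [hf.sum_natDegree_eq_of_eulerWr_eq hWr, ← pow_succ, natDegree_X_pow]

theorem exists_parityRigid {k : ℕ} (hk : Even k) (n j : ℕ) :
    ∃ w : ℝ[X], w.natDegree = 2 * j + 1 ∧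
      ParityRigid k n (X ^ (∑ i : Fin k, (i : ℕ)) * w) 2 := by
  induction j with
  | zero => exact ⟨X, natDegree_X, parityRigid_X_pow_mul_X hk n⟩
  | succ j ih =>
    obtain ⟨w, hdeg, hw⟩ := ih
    have hw0 : w ≠ 0 := ne_zero_of_natDegree_gt (n := 0) (by omega)
    obtain ⟨x, hx, hx0⟩ := ((hw.eventually_mul (mul_ne_zero (pow_ne_zero _ X_ne_zero) hw0)).and
      self_mem_nhdsWithin).exists
    refine ⟨w * (1 + C (x ^ 2) * X ^ 2), ?_, by rwa [← mul_assoc]⟩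
    rw [natDegree_mul_one_add_C_mul_X_sq hw0 (pow_ne_zero 2 hx0), hdeg]
    ring

/-- **Theorem of Eremenko–Gabrielov.** If `k` and `n` are both even with `0 < k < n`,
then the real Wronski map is not surjective: there is a nonzero real polynomial `w`
of degree at most `k(n-k)` such that no `k`-tuple of ℝ-linearly independent real
polynomials of degree at most `n-1` has Wronskian a nonzero scalar multiple of `w`. -/
theorem real_wronski_map_not_surjective (k n : ℕ) (hk : 0 < k) (hkn : k < n)
    (hke : Even k) (hne : Even n) :
    ∃ w : Polynomial ℝ, w ≠ 0 ∧ w.degree ≤ (k * (n - k) : ℕ) ∧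
      ¬ ∃ f : Fin k → Polynomial ℝ, LinearIndependent ℝ f ∧
          (∀ i, (f i).degree ≤ (n - 1 : ℕ)) ∧
          ∃ c : ℝ, c ≠ 0 ∧ Wr f = Polynomial.C c * w := by
  obtain ⟨j, hj⟩ : ∃ j, 2 * j + 1 + 1 = k * (n - k) := by
    obtain ⟨m, hm⟩ := hke.mul_right (n - k)
    exact ⟨m - 1, by have := Nat.mul_pos hk (Nat.sub_pos_of_lt hkn); omega⟩
  obtain ⟨w, hdeg, hw⟩ := exists_parityRigid hke n j
  have hw0 : w ≠ 0 := ne_zero_of_natDegree_gt (n := 0) (by omega)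
  refine ⟨w, hw0, degree_le_of_natDegree_le (by omega), ?_⟩
  rintro ⟨f, hf, hle, c, -, hWr⟩
  have hmem (r : Fin k) : f r ∈ degreeLT ℝ n :=
    mem_degreeLT.2 ((hle r).trans_lt (WithBot.coe_lt_coe.2 (Nat.sub_one_lt_of_lt hkn)))
  obtain ⟨A, -, hA⟩ := exists_isAdapted_mulVec hf
  have hmemA := map_C_mulVec_mem A hmem
  have hWrA : eulerWr (A.map C *ᵥ f) = C (A.det * c) * (X ^ (∑ i : Fin k, (i : ℕ)) * w) := by
    rw [eulerWr_mulVec, eulerWr, hWr, C_mul]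
    ring
  have hneg := parityExcess_eq_neg_two hke hne hkn.le hA.injective_natDegree
    (fun r => (natDegree_lt_iff_degree_lt (hA.ne_zero r)).2 (mem_degreeLT.1 (hmemA r))) <| by
      rw [hA.sum_natDegree_eq_of_eulerWr_eq hWrA, natDegree_X_pow_mul _ hw0, hdeg, ← hj]
      ring
  have htwo := hw _ hA hmemA _ hWrA
  omega
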